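/- Let r ≥ 1 and let i, j, k, l, m be integers with 1 ≤ i < j ≤ r, 0 ≤ l ≤ r-1, m ≥ 0, 1 ≤ k ≤ mr+l, and k ≥ j - i. Then in ℚ(x_1,…,x_r) one has X(i,k) · X(j, mr+l) = X(i, j-i-1) · X(k+i+1, mr+l+j-k-i-1) + X(i, mr+l+j-i) · X(j, k+i-j). -/

import Mathlib

/-- The ambient field `ℚ(x_1, …, x_r)`, realized as the fraction field of the
polynomial ring over `ℚ` in variables indexed by `ZMod r` (so indices are
automatically read modulo `r`). -/
noncomputable abbrev CyclicField (r : ℕ) : Type :=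
  FractionRing (MvPolynomial (ZMod r) ℚ)

/-- The variable `x_i` for `i : ℤ`, with `x_{i+r} = x_i`. -/
noncomputable def xv (r : ℕ) (i : ℤ) : CyclicField r :=
  algebraMap (MvPolynomial (ZMod r) ℚ) (CyclicField r) (MvPolynomial.X (i : ZMod r))

/-- The generalized cluster variable `X(l, n)` (the image of the indecomposable
nilpotent representation `E_l[n]` under the Caldero–Chapoton map):
`X(l,0) = 1` and, for `n ≥ 1`,
`X(l,n) = x_{l+n}/x_l + Σ_{k=1}^{n-1} (x_{l+n}·x_{l+r-1})/(x_{l+k-1}·x_{l+k}) + x_{l+r-1}/x_{l+n-1}`. -/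
noncomputable def Xgcv (r : ℕ) (l : ℤ) : ℕ → CyclicField r
  | 0 => 1
  | n + 1 =>
      xv r (l + n + 1) / xv r l
        + ∑ k ∈ Finset.Icc 1 n,
            (xv r (l + n + 1) * xv r (l + r - 1)) / (xv r (l + k - 1) * xv r (l + k))
        + xv r (l + r - 1) / xv r (l + n)

theorem xv_ne_zero (r : ℕ) (i : ℤ) : xv r i ≠ 0 := by
  unfold xv
  rw [Ne, FaithfulSMul.algebraMap_eq_zero_iff]
  exact MvPolynomial.X_ne_zero _

theorem xv_period (r : ℕ) (l : ℤ) : xv r (l + r - 1) = xv r (l - 1) := by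
  unfold xv
  congr 2
  push_cast
  simp

/-- Partial sums of `1 / (x_t x_{t+1})` starting at `p`. -/
noncomputable def Ssum (r : ℕ) (p : ℤ) (n : ℕ) : CyclicField r :=
  ∑ t ∈ Finset.range n, 1 / (xv r (p + t) * xv r (p + t + 1))

theorem Ssum_add (r : ℕ) (p : ℤ) (a b : ℕ) :
    Ssum r p (a + b) = Ssum r p a + Ssum r (p + a) b := by
  unfold Ssum
  rw [Finset.sum_range_add]
  congr 1
  apply Finset.sum_congr rfl
  intro t _
  push_cast
  simp only [add_assoc]

theorem Xgcv_eq (r : ℕ) (l : ℤ) (n : ℕ) :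
    Xgcv r l n = xv r (l + n) * xv r (l - 1) * Ssum r (l - 1) (n + 1) := by
  have h0 := xv_ne_zero r
  cases n with
  | zero =>
    have h1 := h0 l
    have h2 := h0 (l - 1)
    simp only [Xgcv, Ssum, zero_add, Finset.sum_range_one, Nat.cast_zero, add_zero,
      sub_add_cancel]
    field_simp
  | succ n =>
    have h1 := h0 l
    have h2 := h0 (l - 1)
    have h3 := h0 (l + n)
    have h4 := h0 (l + n + 1)
    have e : Finset.Icc 1 n = Finset.Ico 1 (n + 1) := by ext t; simp only [Finset.mem_Icc, Finset.mem_Ico]; omega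
    simp only [Xgcv, xv_period, Ssum]
    rw [Finset.sum_range_succ, Finset.sum_range_succ', e, Finset.sum_Ico_eq_sum_range]
    have e1 : ∀ t : ℕ, l - 1 + ((t + 1 : ℕ) : ℤ) = l + t := by intro t; push_cast; ring
    have e2 : ∀ t : ℕ, l + ((1 + t : ℕ) : ℤ) = l + t + 1 := by intro t; push_cast; ring
    have e3 : ∀ t : ℕ, l + t + 1 - 1 = l + t := by intro t; ring
    have e4 : l + ((n + 1 : ℕ) : ℤ) = l + n + 1 := by push_cast; ring
    simp only [e1, e2, e3, e4, Nat.cast_zero, add_zero, sub_add_cancel, Nat.add_sub_cancel]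
    simp only [div_eq_mul_inv, ← Finset.mul_sum, one_mul]
    generalize ∑ t ∈ Finset.range n, (xv r (l + t) * xv r (l + t + 1))⁻¹ = T
    field_simp
    ring

/-- inductive multiplication formula, case `i < j`, `k ≥ j - i`. -/
theorem stmt5 (r : ℕ) (hr : 1 ≤ r) (i j k l m : ℤ)
    (hi : 1 ≤ i) (hij : i < j) (hj : j ≤ r)
    (hl0 : 0 ≤ l) (hl : l ≤ (r : ℤ) - 1) (hm : 0 ≤ m)
    (hk1 : 1 ≤ k) (hk2 : k ≤ m * r + l) (hk : k ≥ j - i) :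
    Xgcv r i k.toNat * Xgcv r j (m * r + l).toNat =
      Xgcv r i (j - i - 1).toNat * Xgcv r (k + i + 1) (m * r + l + j - k - i - 1).toNat
        + Xgcv r i (m * r + l + j - i).toNat * Xgcv r j (k + i - j).toNat := by
  generalize m * r + l = N at *
  obtain ⟨a, ha⟩ := Int.eq_ofNat_of_zero_le (show 0 ≤ j - i - 1 by omega)
  obtain ⟨b, hb⟩ := Int.eq_ofNat_of_zero_le (show 0 ≤ k + i - j by omega)
  obtain ⟨c, hc⟩ := Int.eq_ofNat_of_zero_le (show 0 ≤ N + j - k - i - 1 by omega)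
  have n1 : k.toNat = (a + 1) + b := by omega
  have n2 : N.toNat = (b + 1) + c := by omega
  have n3 : (j - i - 1).toNat = a := by omega
  have n4 : (N + j - k - i - 1).toNat = c := by omega
  have n5 : (N + j - i).toNat = (a + 1) + (b + 1) + c := by omega
  have n6 : (k + i - j).toNat = b := by omega
  rw [n1, n2, n3, n4, n5, n6]
  simp only [Xgcv_eq]
  have j1 : j = i + a + 1 := by omega
  have k1 : k = a + 1 + b := by omega
  subst j1 k1
  rw [show a + 1 + b + 1 = (a + 1) + (b + 1) by ring,
    show b + 1 + c + 1 = (b + 1) + (c + 1) by ring,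
    show a + 1 + (b + 1) + c + 1 = (a + 1) + ((b + 1) + (c + 1)) by ring]
  simp only [Ssum_add r _ (a + 1), Ssum_add r _ (b + 1) (c + 1)]
  push_cast
  ring_nf
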